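/- Fix an integer n ≥ 100 and set ν = 1/n. Let f₀, f₁ be orientation-preserving C¹ diffeomorphisms of S¹ = ℝ/2ℤ such that: on the arc I = [−ν, 1+ν], f₀(x) = (1 − ν/2)·x and f₁(x) = 1 + (1/4 − ν)·(x − 1); on the arc J = [−2/3, −1/3], both f₀ and f₁ have derivative identically equal to 1 + ν and each has exactly one (repelling) fixed point in J, lying at distance at least ν from the endpoints of J; and f_j(x) ≥ x + ν²/2 for all x ∈ [−1/3, −ν] and f_j(x) ≤ x − ν²/2 for all x ∈ [1+ν, 4/3], for j = 0, 1. Let f_t (t ∈ [0,1]) be the isotopy with f_t(x) = (1 − t²)·f₀(x) + t²·f₁(x) (defined via lifts), and let F(b,x) = (h(b), f_{y(b)}(x)) be the associated almost step skew product over the solenoid. Then the open set V = π^{−1}((0, 1/4)) ⊂ B × S¹ is 2^{−n}-invisible for F with respect to the Lebesgue measure on B × S¹. -/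

import Mathlib

open MeasureTheory Set Filter Topology Metric

instance : Fact ((0 : ℝ) < 2) := ⟨by norm_num⟩
instance : Fact ((0 : ℝ) < 1) := ⟨by norm_num⟩

/-- The circle `S¹ = ℝ/2ℤ` (the fiber). -/
abbrev S1 := AddCircle (2 : ℝ)

/-- The base ambient space `(ℝ/ℤ) × ℂ`. -/
abbrev Base := AddCircle (1 : ℝ) × ℂ

/-- The solenoid map `h(y,z) = (2y, e^{2πiy} + λz)` (here `AddCircle.toCircle y = e^{2πiy}`). -/
noncomputable def solenoidMap (lam : ℝ) (b : Base) : Base :=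
  (b.1 + b.1, (AddCircle.toCircle b.1 : ℂ) + lam * b.2)

/-- The solid torus `B = (ℝ/ℤ) × D(R)`. -/
def solidTorus (R : ℝ) : Set Base := univ ×ˢ closedBall (0 : ℂ) R

/-- The representative in `[0,1)` of a point of `ℝ/ℤ`. -/
noncomputable def rep1 (y : AddCircle (1 : ℝ)) : ℝ :=
  ((AddCircle.equivIco (1 : ℝ) 0) y : ℝ)

/-- The family of fiber maps of the almost step skew product:
`f_y = f₀` on `[0, 3/8)`, `f_y = f_{8y−3}` on `[3/8, 1/2)`, `f_y = f₁` on `[1/2, 7/8)`,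
and `f_y = f_{8−8y}` on `[7/8, 1)`. -/
noncomputable def fiberFam (f0 f1 : S1 → S1) (ft : ℝ → S1 → S1) (y : ℝ) : S1 → S1 :=
  if y < 3 / 8 then f0
  else if y < 1 / 2 then ft (8 * y - 3)
  else if y < 7 / 8 then f1
  else ft (8 - 8 * y)

/-- The almost step skew product `F(b,x) = (h(b), f_{y(b)}(x))` over the solenoid. -/
noncomputable def almostStep (lam : ℝ) (f0 f1 : S1 → S1) (ft : ℝ → S1 → S1)
    (p : Base × S1) : Base × S1 :=
  (solenoidMap lam p.1, fiberFam f0 f1 ft (rep1 p.1.1) p.2)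

/-- The forward itinerary of `b`: `ω_k = 0` iff the fractional part of `2^k·y(b)` lies in
`[0, 1/2)` (`false` = 0, `true` = 1). -/
noncomputable def itin (b : Base) (k : ℕ) : Bool :=
  decide ((1 : ℝ) / 2 ≤ rep1 ((2 ^ k : ℕ) • b.1))

/-- A circle map is orientation preserving if it admits a strictly monotone lift
commuting with the deck translation `x ↦ x + 2`. -/
def OrientPreserving (f : S1 → S1) : Prop :=
  ∃ G : ℝ → ℝ, StrictMono G ∧ (∀ x, G (x + 2) = G x + 2) ∧
    ∀ x : ℝ, ((G x : ℝ) : S1) = f ((x : ℝ) : S1)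

/-- The average frequency with which the first `N` points of the orbit of `p` visit `V`. -/
noncomputable def visitFreq {X : Type*} (F : X → X) (V : Set X) (p : X) (N : ℕ) : ℝ :=
  (∑ k ∈ Finset.range N, V.indicator (fun _ => (1 : ℝ)) (F^[k] p)) / N

/-!
The base enters only through the doubling map `y ↦ 2y` of `ℝ/ℤ`, which is ergodic. Over every base
point, the fiber map traps the arc `I = [-ν, 1 + ν]`, expands `J = [-2/3, -1/3]` and moves the rest
of the circle towards `I`, so an orbit that never enters `I` stays in `J`; by expansion there is at
most one such orbit over each base orbit, and almost every orbit is eventually trapped over `I`.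

Inside `I`, each visit of the base orbit to `[1/2, 7/8)` applies `f₁`, which sends `I` into
`[3/4, ∞)`, while every fiber map satisfies `f(x) ≥ (1 - ν/2)x` on `[0, 1]`. Since
`3/4 · (1 - ν/2)^(3n/2) > 1/4`, entering `(0, 1/4)` requires the base orbit to have avoided
`[1/2, 7/8)` for about `3n/2` consecutive steps. The set of such base points has measure less than
`2⁻ⁿ`, and a pointwise ergodic upper bound for its indicator concludes.
-/

/-- The open set `V` is `ε`-invisible for `F` with respect to `μ`: almost every orbit visits `V`
with asymptotic upper frequency at most `ε`. -/
def IsInvisible {X : Type*} [MeasurableSpace X] (F : X → X) (μ : Measure X) (V : Set X) (ε : ℝ) :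
    Prop :=
  ∀ᵐ p ∂μ, limsup (visitFreq F V p) atTop ≤ ε

section BirkhoffSums

variable {X : Type*} {T : X → X} {g : X → ℝ}

/-- The running maximum `max_{0 ≤ k ≤ n} S_k(x)` of the Birkhoff sums `S_k` of `g` along `T`;
it includes `S_0 = 0`, so it is nonnegative. -/
noncomputable def maxBirkhoffSum (T : X → X) (g : X → ℝ) (n : ℕ) (x : X) : ℝ :=
  partialSups (fun k ↦ birkhoffSum T g k x) n

lemma maxBirkhoffSum_zero (x : X) : maxBirkhoffSum T g 0 x = 0 := by
  simp [maxBirkhoffSum]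

lemma maxBirkhoffSum_monotone (x : X) : Monotone fun n ↦ maxBirkhoffSum T g n x :=
  partialSups_monotone _

lemma maxBirkhoffSum_nonneg (n : ℕ) (x : X) : 0 ≤ maxBirkhoffSum T g n x :=
  (maxBirkhoffSum_zero x).symm.trans_le (maxBirkhoffSum_monotone x n.zero_le)

lemma maxBirkhoffSum_succ (n : ℕ) (x : X) :
    maxBirkhoffSum T g (n + 1) x = max 0 (g x + maxBirkhoffSum T g n (T x)) := by
  have partialSups_succ_nat (x : X) (n : ℕ) : maxBirkhoffSum T g (n + 1) x =
      max (maxBirkhoffSum T g n x) (birkhoffSum T g (n + 1) x) := partialSups_succ _ n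
  induction n with
  | zero => simp [partialSups_succ_nat, maxBirkhoffSum_zero]
  | succ n ih =>
    rw [partialSups_succ_nat, ih, birkhoffSum_succ', max_assoc, max_add_add_left,
      ← partialSups_succ_nat]

lemma abs_maxBirkhoffSum_succ_sub_le (n : ℕ) (x : X) :
    |maxBirkhoffSum T g (n + 1) x - maxBirkhoffSum T g n (T x)| ≤ |g x| := by
  have hM : 0 ≤ maxBirkhoffSum T g n (T x) := maxBirkhoffSum_nonneg n (T x)
  rw [maxBirkhoffSum_succ]
  grind

lemma bddAbove_range_birkhoffSum_apply_iff (x : X) :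
    BddAbove (range fun n ↦ birkhoffSum T g n (T x)) ↔
      BddAbove (range fun n ↦ birkhoffSum T g n x) := by
  simp only [bddAbove_def, forall_mem_range]
  constructor
  · rintro ⟨C, hC⟩
    refine ⟨max 0 (g x + C), fun n ↦ ?_⟩
    cases n with
    | zero => simp
    | succ n => rw [birkhoffSum_succ']; exact le_max_of_le_right (by linarith [hC n])
  · rintro ⟨C, hC⟩
    refine ⟨C - g x, fun n ↦ ?_⟩
    have := hC (n + 1)
    rw [birkhoffSum_succ'] at this
    linarith

lemma tendsto_maxBirkhoffSum_succ_sub (x : X)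
    (hx : ¬ BddAbove (range fun n ↦ birkhoffSum T g n x)) :
    Tendsto (fun n ↦ maxBirkhoffSum T g (n + 1) x - maxBirkhoffSum T g n (T x)) atTop
      (𝓝 (g x)) := by
  have hTx : Tendsto (fun n ↦ maxBirkhoffSum T g n (T x)) atTop atTop := by
    refine tendsto_atTop_atTop_of_monotone' (maxBirkhoffSum_monotone _) ?_
    rwa [← bddAbove_range_birkhoffSum_apply_iff, ← bddAbove_range_partialSups] at hx
  refine tendsto_const_nhds.congr' ?_
  filter_upwards [hTx.eventually_ge_atTop (-g x)] with n hn
  rw [maxBirkhoffSum_succ, max_eq_right (by linarith)]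
  ring

variable [MeasurableSpace X] {μ : Measure X}

lemma integrable_maxBirkhoffSum (hT : MeasurePreserving T μ μ) (hg : Integrable g μ) (n : ℕ) :
    Integrable (maxBirkhoffSum T g n) μ := by
  induction n with
  | zero => rw [funext maxBirkhoffSum_zero]; exact integrable_zero X ℝ μ
  | succ n ih =>
    rw [funext (maxBirkhoffSum_succ n)]
    exact (integrable_zero X ℝ μ).sup (hg.add (hT.integrable_comp_of_integrable ih))

lemma integral_maxBirkhoffSum_succ_sub_nonneg (hT : MeasurePreserving T μ μ)
    (hg : Integrable g μ) (n : ℕ) :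
    0 ≤ ∫ x, (maxBirkhoffSum T g (n + 1) x - maxBirkhoffSum T g n (T x)) ∂μ := by
  have hM := integrable_maxBirkhoffSum hT hg
  have integral_comp : ∫ x, maxBirkhoffSum T g n (T x) ∂μ = ∫ x, maxBirkhoffSum T g n x ∂μ := by
    conv_rhs => rw [← hT.map_eq]
    exact (integral_map hT.aemeasurable (by simpa only [hT.map_eq] using (hM n).1)).symm
  have hMT : Integrable (fun x ↦ maxBirkhoffSum T g n (T x)) μ :=
    hT.integrable_comp_of_integrable (hM n)
  rw [integral_sub (hM _) hMT, integral_comp, sub_nonneg]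
  exact integral_mono (hM _) (hM _) fun x ↦ maxBirkhoffSum_monotone x n.le_succ

/-- The set where the Birkhoff sums are unbounded above is invariant. If it had full measure, the
differences `M_{n+1} - M_n ∘ T` of the running maxima would converge to `g` almost everywhere while
having nonnegative integrals. -/
theorem ae_bddAbove_birkhoffSum_of_integral_neg (hT : Ergodic T μ) (hgm : Measurable g)
    (hg : Integrable g μ) (hneg : ∫ x, g x ∂μ < 0) :
    ∀ᵐ x ∂μ, BddAbove (range fun n ↦ birkhoffSum T g n x) := by
  have measurable_birkhoffSum (n : ℕ) : Measurable (birkhoffSum T g n) :=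
    Finset.measurable_fun_sum _ fun k _ ↦ hgm.comp (hT.measurable.iterate k)
  have hmeas : MeasurableSet {x | BddAbove (range fun n ↦ birkhoffSum T g n x)} :=
    measurableSet_bddAbove_range measurable_birkhoffSum
  refine (hT.ae_mem_or_ae_notMem hmeas (Set.ext bddAbove_range_birkhoffSum_apply_iff))
    |>.resolve_right fun hunbdd ↦ hneg.not_ge ?_
  have hlim : Tendsto
      (fun n ↦ ∫ x, (maxBirkhoffSum T g (n + 1) x - maxBirkhoffSum T g n (T x)) ∂μ) atTop
      (𝓝 (∫ x, g x ∂μ)) := by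
    have hM := integrable_maxBirkhoffSum hT.toMeasurePreserving hg
    refine tendsto_integral_of_dominated_convergence (fun x ↦ |g x|) (fun n ↦ ?_) hg.abs
      (fun n ↦ Eventually.of_forall (abs_maxBirkhoffSum_succ_sub_le n)) ?_
    · exact ((hM _).sub (hT.toMeasurePreserving.integrable_comp_of_integrable (hM n))).1
    · filter_upwards [hunbdd] with x hx using tendsto_maxBirkhoffSum_succ_sub x hx
  exact ge_of_tendsto' hlim
    (integral_maxBirkhoffSum_succ_sub_nonneg hT.toMeasurePreserving hg)

theorem ae_birkhoffSum_indicator_le [IsProbabilityMeasure μ] (hT : Ergodic T μ) {E : Set X}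
    (hE : MeasurableSet E) {α : ℝ} (hα : μ.real E < α) :
    ∀ᵐ x ∂μ, ∃ C : ℝ, ∀ N : ℕ, birkhoffSum T (E.indicator (1 : X → ℝ)) N x ≤ α * N + C := by
  have hint : Integrable (E.indicator (1 : X → ℝ)) μ := (integrable_const 1).indicator hE
  have hneg : ∫ x, (E.indicator (1 : X → ℝ) x - α) ∂μ < 0 := by
    rw [integral_sub hint (integrable_const α), integral_indicator_one hE]
    simpa using hα
  filter_upwards [ae_bddAbove_birkhoffSum_of_integral_neg hT
    ((measurable_one.indicator hE).sub_const α) (hint.sub (integrable_const α)) hneg] with x ⟨C, hC⟩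
  refine ⟨C, fun N ↦ ?_⟩
  have := hC (mem_range_self N)
  simp only [birkhoffSum, Finset.sum_sub_distrib, Finset.sum_const, Finset.card_range,
    nsmul_eq_mul] at this ⊢
  linarith

end BirkhoffSums

section VisitFrequencies

variable {X Y : Type*} {F : X → X} {T : Y → Y} {V : Set X} {E : Set Y} {p : X} {y : Y}

lemma visitFreq_eq_birkhoffSum_div (N : ℕ) :
    visitFreq F V p N = birkhoffSum F (V.indicator 1) N p / N := rfl

lemma visitFreq_nonneg (N : ℕ) : 0 ≤ visitFreq F V p N :=
  div_nonneg (Finset.sum_nonneg fun _ _ ↦ indicator_nonneg (fun _ _ ↦ zero_le_one) _)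
    N.cast_nonneg

lemma limsup_visitFreq_le {α C : ℝ}
    (h : ∀ N : ℕ, birkhoffSum F (V.indicator (1 : X → ℝ)) N p ≤ α * N + C) :
    limsup (visitFreq F V p) atTop ≤ α := by
  have hlim : Tendsto (fun N : ℕ ↦ α + C / N) atTop (𝓝 α) := by
    simpa using tendsto_const_nhds.add (tendsto_const_div_atTop_nhds_zero_nat C)
  rw [← hlim.limsup_eq]
  refine limsup_le_limsup ?_ (isCoboundedUnder_le_of_le atTop visitFreq_nonneg)
    hlim.isBoundedUnder_le
  filter_upwards [eventually_gt_atTop 0] with N hN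
  have hN' : (0 : ℝ) < N := mod_cast hN
  rw [visitFreq_eq_birkhoffSum_div, div_le_iff₀ hN', add_mul, div_mul_cancel₀ _ hN'.ne']
  exact h N

lemma birkhoffSum_indicator_le_of_visits {K Q : ℕ}
    (h : ∀ k, F^[k + Q] p ∈ V → T^[k + K] y ∈ E) (N : ℕ) :
    birkhoffSum F (V.indicator (1 : X → ℝ)) N p ≤
      Q + birkhoffSum T (E.indicator (1 : Y → ℝ)) (K + N) y := by
  have hV (q : X) : V.indicator (1 : X → ℝ) q ≤ 1 := indicator_le_self' (by simp) q
  have hV0 (q : X) : 0 ≤ V.indicator (1 : X → ℝ) q := indicator_nonneg (by simp) q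
  have hE0 (b : Y) : 0 ≤ E.indicator (1 : Y → ℝ) b := indicator_nonneg (by simp) b
  have start_le : birkhoffSum F (V.indicator (1 : X → ℝ)) Q p ≤ Q :=
    (Finset.sum_le_sum fun k _ ↦ hV _).trans_eq (by simp)
  have tail_le : birkhoffSum F (V.indicator (1 : X → ℝ)) N (F^[Q] p) ≤
      birkhoffSum T (E.indicator 1) N (T^[K] y) := by
    refine Finset.sum_le_sum fun k _ ↦ ?_
    rw [← Function.iterate_add_apply, ← Function.iterate_add_apply]
    by_cases hk : F^[k + Q] p ∈ V
    · simp [hk, h k hk]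
    · simpa [hk] using hE0 _
  calc birkhoffSum F (V.indicator (1 : X → ℝ)) N p
      ≤ birkhoffSum F (V.indicator 1) (Q + N) p :=
        Finset.sum_le_sum_of_subset_of_nonneg (Finset.range_mono (by lia)) fun _ _ _ ↦ hV0 _
    _ ≤ Q + birkhoffSum T (E.indicator 1) N (T^[K] y) := by
        rw [birkhoffSum_add]; gcongr
    _ ≤ Q + birkhoffSum T (E.indicator 1) (K + N) y := by
        rw [birkhoffSum_add]
        exact add_le_add_right (le_add_of_nonneg_left (Finset.sum_nonneg fun _ _ ↦ hE0 _)) _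

lemma IsInvisible.of_semiconj [MeasurableSpace X] [MeasurableSpace Y] {μ : Measure X}
    {ν : Measure Y} {ε : ℝ} (h : IsInvisible T ν E ε) {π : X → Y}
    (hπ : Measure.QuasiMeasurePreserving π μ ν) (hsemi : Function.Semiconj π F T) :
    IsInvisible F μ (π ⁻¹' E) ε := by
  filter_upwards [hπ.ae h] with p hp
  have visitFreq_comp : visitFreq F (π ⁻¹' E) p = visitFreq T E (π p) := by
    funext N
    simp only [visitFreq, ← (hsemi.iterate_right _).eq]
    rfl
  rwa [visitFreq_comp]

end VisitFrequencies

section SkewProducts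

variable {B X Y : Type*} {h : B → B} {g : B → X → X} {f : B → Y → Y}

/-- The skew product over the base map `h` with fiber maps `g b`. -/
def skewProduct (h : B → B) (g : B → X → X) (p : B × X) : B × X :=
  (h p.1, g p.1 p.2)

lemma skewProduct_iterate_fst (k : ℕ) (p : B × X) : ((skewProduct h g)^[k] p).1 = h^[k] p.1 :=
  (Function.Semiconj.iterate_right (f := Prod.fst) (fun _ ↦ rfl) k).eq p

lemma skewProduct_iterate_succ_snd (k : ℕ) (p : B × X) :
    ((skewProduct h g)^[k + 1] p).2 = g (h^[k] p.1) ((skewProduct h g)^[k] p).2 := by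
  rw [Function.iterate_succ_apply', skewProduct, skewProduct_iterate_fst]

lemma skewProduct_iterate_snd_mem {S : Set X} (hS : ∀ b, MapsTo (g b) S S) {p : B × X}
    (hp : p.2 ∈ S) (k : ℕ) : ((skewProduct h g)^[k] p).2 ∈ S :=
  MapsTo.iterate (s := Prod.snd ⁻¹' S) (fun q hq ↦ hS q.1 hq) k hp

lemma skewProduct_iterate_map {π : X → Y} (hπ : ∀ b, Function.Semiconj π (g b) (f b)) (k : ℕ)
    (b : B) (x : X) :
    (skewProduct h f)^[k] (b, π x) = Prod.map id π ((skewProduct h g)^[k] (b, x)) := by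
  have hsemi : Function.Semiconj (Prod.map id π) (skewProduct h g) (skewProduct h f) :=
    fun p ↦ Prod.ext rfl (hπ p.1 p.2)
  exact ((hsemi.iterate_right k).eq (b, x)).symm

lemma eq_of_forall_skewProduct_iterate_mem [MetricSpace X] {J : Set X}
    (hJ : Bornology.IsBounded J) {c : ℝ} (hc : 1 < c)
    (hexp : ∀ b, ∀ x ∈ J, ∀ x' ∈ J, c * dist x x' ≤ dist (g b x) (g b x')) {b : B} {x x' : X}
    (hx : ∀ k, ((skewProduct h g)^[k] (b, x)).2 ∈ J)
    (hx' : ∀ k, ((skewProduct h g)^[k] (b, x')).2 ∈ J) : x = x' := by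
  have pow_mul_dist_le (k : ℕ) : c ^ k * dist x x' ≤
      dist ((skewProduct h g)^[k] (b, x)).2 ((skewProduct h g)^[k] (b, x')).2 := by
    induction k with
    | zero => simp
    | succ k ih =>
      rw [skewProduct_iterate_succ_snd, skewProduct_iterate_succ_snd, pow_succ', mul_assoc]
      exact (mul_le_mul_of_nonneg_left ih (by linarith)).trans (hexp _ _ (hx k) _ (hx' k))
  by_contra hne
  have hpos : 0 < dist x x' := dist_pos.2 hne
  obtain ⟨k, hk⟩ := pow_unbounded_of_one_lt (diam J / dist x x') hc
  rw [div_lt_iff₀ hpos] at hk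
  exact (hk.trans_le (pow_mul_dist_le k)).not_ge (dist_le_diam_of_mem hJ (hx k) (hx' k))

/-- The points whose first `m` orbit points, starting with the point itself, avoid `S`. -/
def avoidingSet (h : B → B) (S : Set B) (m : ℕ) : Set B :=
  {b | ∀ i < m, h^[i] b ∉ S}

lemma measurableSet_avoidingSet [MeasurableSpace B] (hh : Measurable h) {S : Set B}
    (hS : MeasurableSet S) (m : ℕ) : MeasurableSet (avoidingSet h S m) := by
  simp only [avoidingSet, ofPred_forall]
  exact .iInter fun i ↦ .iInter fun _ ↦ (hh.iterate i) hS.compl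

lemma mem_avoidingSet_succ {S : Set B} {m : ℕ} {b : B} :
    b ∈ avoidingSet h S (m + 1) ↔ b ∉ S ∧ h b ∈ avoidingSet h S m :=
  Nat.forall_lt_succ_left'

end SkewProducts

section Lifts

lemma exists_le_succ_of_drift {u : ℕ → ℝ} {a b ε : ℝ} (hε : 0 < ε) (h0 : u 0 ∈ Ico a b)
    (hstep : ∀ k, u k ∈ Ico a b → u k + ε ≤ u (k + 1)) :
    ∃ k, u k ∈ Ico a b ∧ b ≤ u (k + 1) := by
  by_contra! hstay
  have linear_growth (k : ℕ) : u 0 + k * ε ≤ u k ∧ u k ∈ Ico a b := by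
    induction k with
    | zero => simpa using h0
    | succ k ih =>
      have hk := hstep k ih.2
      exact ⟨by push_cast; linarith, by linarith [ih.2.1], hstay k ih.2⟩
  obtain ⟨k, hk⟩ := exists_nat_gt ((b - u 0) / ε)
  rw [div_lt_iff₀ hε] at hk
  linarith [linear_growth k, (linear_growth k).2.2]

lemma sub_eq_mul_of_hasDerivWithinAt_const {s : Set ℝ} (hs : Convex ℝ s) {f : ℝ → ℝ} {c : ℝ}
    (hf : ∀ x ∈ s, HasDerivWithinAt f c s x) {x y : ℝ} (hx : x ∈ s) (hy : y ∈ s) :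
    f y - f x = c * (y - x) := by
  have hdiff (z : ℝ) (hz : z ∈ s) : HasDerivWithinAt (fun z ↦ f z - c * z) 0 s z :=
    ((hf z hz).sub ((hasDerivWithinAt_id z s).const_mul c)).congr_deriv (by simp)
  have := hs.norm_image_sub_le_of_norm_hasDerivWithin_le hdiff (fun _ _ ↦ norm_zero.le) hx hy
  rw [zero_mul, norm_le_zero_iff] at this
  linear_combination this

/-- The lift cannot cross the point of the circle opposite to the arc, so it stays in the
translate of the arc in which it starts. -/
lemma lift_prop_of_coe_prop {p : ℝ} [Fact (0 < p)] {S : Set ℝ} (hS : IsPreconnected S)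
    {G : ℝ → ℝ} (hG : ContinuousOn G S) {a c : ℝ} (hac : c < a + p) {P : ℝ → ℝ → Prop}
    (hP : ∀ x ∈ S, ∃ t ∈ Icc a c, P x t ∧ (G x : AddCircle p) = t)
    {x₀ : ℝ} (hx₀ : x₀ ∈ S) (hGx₀ : G x₀ ∈ Icc a c) : ∀ x ∈ S, P x (G x) := by
  obtain ⟨d, hcd, hda⟩ := exists_between hac
  have arc_subset : Icc a c ⊆ Ioo (d - p) d :=
    fun t ht ↦ ⟨by linarith [ht.1], ht.2.trans_lt hcd⟩
  have coe_inj {s t : ℝ} (hs : s ∈ Ico (d - p) d) (ht : t ∈ Ico (d - p) d)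
      (hst : (s : AddCircle p) = t) : s = t := by
    refine (AddCircle.coe_eq_coe_iff_of_mem_Ico (a := d - p) ?_ ?_).1 hst <;>
      rwa [sub_add_cancel]
  have coe_sub_period : ((d - p : ℝ) : AddCircle p) = d := by
    rw [AddCircle.coe_sub, AddCircle.coe_period, sub_zero]
  have coe_ne (x : ℝ) (hx : x ∈ S) : (G x : AddCircle p) ≠ d := by
    intro hGx
    obtain ⟨t, ht, -, hGt⟩ := hP x hx
    have htd : t = d - p := coe_inj (Ioo_subset_Ico_self (arc_subset ht))
      ⟨le_rfl, sub_lt_self d Fact.out⟩ (by rw [← hGt, hGx, coe_sub_period])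
    exact (arc_subset ht).1.ne' htd
  have image_subset : G '' S ⊆ Ioo (d - p) d := by
    refine (hS.image G hG).subset_left_of_subset_union isOpen_Ioo
      (isOpen_Iio (a := d - p) |>.union (isOpen_Ioi (a := d))) ?_ ?_
      ⟨G x₀, mem_image_of_mem G hx₀, arc_subset hGx₀⟩
    · rw [disjoint_left]
      rintro y ⟨h₁, h₂⟩ (h | h)
      exacts [h.not_gt h₁, h.not_gt h₂]
    · rintro _ ⟨x, hx, rfl⟩
      have hd : G x ≠ d := fun hGx ↦ coe_ne x hx (by rw [hGx])
      have hdp : G x ≠ d - p := fun hGx ↦ coe_ne x hx (by rw [hGx, coe_sub_period])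
      simp only [mem_union, mem_Ioo, mem_Iio, mem_Ioi]
      grind
  intro x hx
  obtain ⟨t, ht, hPt, hGt⟩ := hP x hx
  rwa [coe_inj (Ioo_subset_Ico_self (image_subset (mem_image_of_mem G hx)))
    (Ioo_subset_Ico_self (arc_subset ht)) hGt]

lemma measurable_of_lift {B : Type*} [MeasurableSpace B] {p : ℝ} [hp : Fact (0 < p)]
    {g : B → ℝ → ℝ} {f : B → AddCircle p → AddCircle p}
    (hlift : ∀ b (x : ℝ), (g b x : AddCircle p) = f b x)
    (hg : Measurable fun q : B × ℝ ↦ g q.1 q.2) :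
    Measurable fun q : B × AddCircle p ↦ f q.1 q.2 := by
  have hrep : Measurable fun x : AddCircle p ↦ (AddCircle.equivIco p 0 x : ℝ) :=
    measurable_subtype_coe.comp (AddCircle.measurableEquivIco p 0).measurable
  have hmeas : Measurable fun q : B × AddCircle p ↦
      (g q.1 (AddCircle.equivIco p 0 q.2) : AddCircle p) :=
    AddCircle.measurable_mk'.comp
      (hg.comp (measurable_fst.prodMk (hrep.comp measurable_snd)))
  simpa only [hlift, AddCircle.coe_equivIco] using hmeas

instance {p : ℝ} [Fact (0 < p)] : NullSingletonClass (volume : Measure (AddCircle p)) where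
  measure_singleton x := by simpa using AddCircle.volume_closedBall (T := p) (x := x) 0

end Lifts

section Dynamics

/-- The arc `I = [-ν, 1 + ν]`, trapping for the fiber maps. -/
abbrev coreArc (ν : ℝ) : Set ℝ := Icc (-ν) (1 + ν)

/-- The arc `J = [-2/3, -1/3]`, on which the fiber maps are expanding. -/
abbrev repellingArc : Set ℝ := Icc (-(2 / 3)) (-(1 / 3))

/-- The properties of a lift to `ℝ` of a circle map that are inherited by convex combinations
and drive the dynamics of the skew product: points move from `J` to `I` on either side, get trapped
in `I`, and move towards `0` slowly. -/
structure ModelLift (ν : ℝ) (g : ℝ → ℝ) : Prop where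
  monotone : Monotone g
  map_add_two : ∀ x, g (x + 2) = g x + 2
  mapsTo_coreArc : MapsTo g (coreArc ν) (coreArc ν)
  add_drift_le : ∀ x ∈ Icc (-(1 / 3)) (-ν), x + ν ^ 2 / 2 ≤ g x
  le_sub_drift : ∀ x ∈ Icc (1 + ν) (4 / 3), g x ≤ x - ν ^ 2 / 2
  sub_eq_mul : ∀ x ∈ repellingArc, ∀ y ∈ repellingArc, g y - g x = (1 + ν) * (y - x)
  mul_le : ∀ x ∈ Icc (0 : ℝ) 1, (1 - ν / 2) * x ≤ g x

variable {ν : ℝ}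

lemma convex_modelLift : Convex ℝ {g | ModelLift ν g} := by
  intro g hg g' hg' s t hs ht hst
  obtain rfl : s = 1 - t := by linarith
  exact
    { monotone := (hg.monotone.const_smul hs).add (hg'.monotone.const_smul ht)
      map_add_two := fun x ↦ by
        simp only [Pi.add_apply, Pi.smul_apply, smul_eq_mul, hg.map_add_two, hg'.map_add_two]
        ring
      mapsTo_coreArc := fun x hx ↦
        convex_Icc _ _ (hg.mapsTo_coreArc hx) (hg'.mapsTo_coreArc hx) hs ht hst
      add_drift_le := fun x hx ↦
        convex_Ici (x + ν ^ 2 / 2) (hg.add_drift_le x hx) (hg'.add_drift_le x hx) hs ht hst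
      le_sub_drift := fun x hx ↦
        convex_Iic (x - ν ^ 2 / 2) (hg.le_sub_drift x hx) (hg'.le_sub_drift x hx) hs ht hst
      sub_eq_mul := fun x hx y hy ↦ by
        simp only [Pi.add_apply, Pi.smul_apply, smul_eq_mul]
        linear_combination (1 - t) * hg.sub_eq_mul x hx y hy + t * hg'.sub_eq_mul x hx y hy
      mul_le := fun x hx ↦
        convex_Ici ((1 - ν / 2) * x) (hg.mul_le x hx) (hg'.mul_le x hx) hs ht hst }

lemma modelLift_of_lift (hν0 : 0 < ν) (hν : ν ≤ 1 / 6) {f : S1 → S1} {G : ℝ → ℝ}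
    (hG : Continuous G) (hmono : Monotone G) (hlift : ∀ x : ℝ, (G x : S1) = f x)
    (hdeck : ∀ x, G (x + 2) = G x + 2) (hcore : MapsTo G (coreArc ν) (coreArc ν))
    (hup : ∀ x ∈ Icc (-(1 / 3)) (-ν), ∃ t : ℝ, x + ν ^ 2 / 2 ≤ t ∧ t ≤ 1 + ν ∧ f x = t)
    (hdown : ∀ x ∈ Icc (1 + ν) (4 / 3), ∃ t : ℝ, -ν ≤ t ∧ t ≤ x - ν ^ 2 / 2 ∧ f x = t)
    (hderiv : ∀ x ∈ repellingArc, deriv G x = 1 + ν)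
    (hslow : ∀ x ∈ Icc (0 : ℝ) 1, (1 - ν / 2) * x ≤ G x) : ModelLift ν G := by
  have hsq : 0 ≤ ν ^ 2 / 2 := by positivity
  have left_mem : -ν ∈ coreArc ν := left_mem_Icc.2 (by linarith)
  have right_mem : 1 + ν ∈ coreArc ν := right_mem_Icc.2 (by linarith)
  refine ⟨hmono, hdeck, hcore, ?_, ?_, fun x hx y hy ↦ ?_, hslow⟩
  · refine lift_prop_of_coe_prop (p := 2) (a := -(1 / 3)) (c := 1 + ν)
      (P := fun x t ↦ x + ν ^ 2 / 2 ≤ t) isPreconnected_Icc hG.continuousOn (by linarith)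
      (fun x hx ↦ ?_) (right_mem_Icc.2 (by linarith))
      (Icc_subset_Icc_left (by linarith) (hcore left_mem))
    obtain ⟨t, hxt, ht, hft⟩ := hup x hx
    exact ⟨t, ⟨by linarith [hx.1], ht⟩, hxt, (hlift x).trans hft⟩
  · refine lift_prop_of_coe_prop (p := 2) (a := -ν) (c := 4 / 3)
      (P := fun x t ↦ t ≤ x - ν ^ 2 / 2) isPreconnected_Icc hG.continuousOn (by linarith)
      (fun x hx ↦ ?_) (left_mem_Icc.2 (by linarith))
      (Icc_subset_Icc_right (by linarith) (hcore right_mem))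
    obtain ⟨t, ht, htx, hft⟩ := hdown x hx
    exact ⟨t, ⟨ht, by linarith [hx.2]⟩, htx, (hlift x).trans hft⟩
  · refine sub_eq_mul_of_hasDerivWithinAt_const (convex_Icc _ _) (fun z hz ↦ ?_) hx hy
    rw [← hderiv z hz]
    have hne : deriv G z ≠ 0 := by rw [hderiv z hz]; positivity
    exact (differentiableAt_of_deriv_ne_zero hne).hasDerivAt.hasDerivWithinAt

variable {B : Type*} {h : B → B} {g : B → ℝ → ℝ} {f : B → S1 → S1}

lemma exists_skewProduct_iterate_mem_coreArc (hν0 : 0 < ν) (hg : ∀ b, ModelLift ν (g b))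
    {p : B × ℝ} (hp : p.2 ∈ Icc (-(1 / 3)) (4 / 3)) :
    ∃ k, ((skewProduct h g)^[k] p).2 ∈ coreArc ν := by
  have hε : 0 < ν ^ 2 / 2 := by positivity
  rcases lt_or_ge p.2 (-ν) with hlow | hlow
  · obtain ⟨k, hk, hk'⟩ := exists_le_succ_of_drift
      (u := fun k ↦ ((skewProduct h g)^[k] p).2) (a := -(1 / 3)) hε ⟨hp.1, hlow⟩ fun k hk ↦ by
        simp only [skewProduct_iterate_succ_snd]
        exact (hg _).add_drift_le _ (Ico_subset_Icc_self hk)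
    refine ⟨k + 1, hk', ?_⟩
    rw [skewProduct_iterate_succ_snd]
    exact ((hg _).monotone hk.2.le).trans
      ((hg _).mapsTo_coreArc (left_mem_Icc.2 (by linarith))).2
  rcases le_or_gt p.2 (1 + ν) with hhigh | hhigh
  · exact ⟨0, hlow, hhigh⟩
  · obtain ⟨k, hk, hk'⟩ := exists_le_succ_of_drift
      (u := fun k ↦ -((skewProduct h g)^[k] p).2) (a := -(4 / 3)) (b := -(1 + ν)) hε
      ⟨neg_le_neg hp.2, neg_lt_neg hhigh⟩ fun k hk ↦ by
        have := (hg (h^[k] p.1)).le_sub_drift ((skewProduct h g)^[k] p).2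
          ⟨by linarith [hk.2], by linarith [hk.1]⟩
        simp only [skewProduct_iterate_succ_snd]
        linarith
    refine ⟨k + 1, ?_, neg_le_neg_iff.1 hk'⟩
    rw [skewProduct_iterate_succ_snd]
    exact ((hg _).mapsTo_coreArc (right_mem_Icc.2 (by linarith))).1.trans
      ((hg _).monotone (neg_lt_neg_iff.1 hk.2).le)

lemma mem_repellingArc_or_exists_coe_eq {y : ℝ} (hy : y ∈ Icc (-(7 / 3)) (4 / 3)) :
    y ∈ repellingArc ∨ ∃ x : ℝ, x ∈ Icc (-(1 / 3)) (4 / 3) ∧ (x : S1) = y := by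
  rcases lt_or_ge y (-(2 / 3)) with hlow | hlow
  · exact .inr ⟨y + 2, ⟨by linarith [hy.1], by linarith⟩, AddCircle.coe_add_period 2 y⟩
  rcases le_or_gt y (-(1 / 3)) with hhigh | hhigh
  · exact .inl ⟨hlow, hhigh⟩
  · exact .inr ⟨y, ⟨hhigh.le, hy.2⟩, rfl⟩

lemma ModelLift.apply_mem_Icc {G : ℝ → ℝ} (hG : ModelLift ν G) (hν0 : 0 < ν) (hν : ν ≤ 1 / 3)
    {x : ℝ} (hx : x ∈ repellingArc) : G x ∈ Icc (-(7 / 3)) (4 / 3) := by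
  have left_mem : -ν ∈ coreArc ν := left_mem_Icc.2 (by linarith)
  have right_mem : 1 + ν ∈ coreArc ν := right_mem_Icc.2 (by linarith)
  have hlow : G (1 + ν) ≤ G x + 2 := hG.map_add_two x ▸ hG.monotone (by linarith [hx.1])
  have hhigh : G x ≤ G (-ν) := hG.monotone (by linarith [hx.2])
  exact ⟨by linarith [(hG.mapsTo_coreArc right_mem).1],
    by linarith [(hG.mapsTo_coreArc left_mem).2]⟩

lemma forall_mem_repellingArc_or_exists_mem_coreArc (hν0 : 0 < ν) (hν : ν ≤ 1 / 3)
    (hg : ∀ b, ModelLift ν (g b)) (hlift : ∀ b (x : ℝ), (g b x : S1) = f b x) {b : B} {x : ℝ}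
    (hx : x ∈ Icc (-(7 / 3)) (4 / 3)) :
    (∀ k, ((skewProduct h g)^[k] (b, x)).2 ∈ repellingArc) ∨
      ∃ k, ((skewProduct h f)^[k] (b, (x : S1))).2 ∈ (fun t : ℝ ↦ (t : S1)) '' coreArc ν := by
  refine or_iff_not_imp_right.2 fun hno ↦ ?_
  have mem_of_mem_Icc (k : ℕ) (hk : ((skewProduct h g)^[k] (b, x)).2 ∈ Icc (-(7 / 3)) (4 / 3)) :
      ((skewProduct h g)^[k] (b, x)).2 ∈ repellingArc := by
    refine (mem_repellingArc_or_exists_coe_eq hk).resolve_right ?_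
    rintro ⟨x', hx', hcoe⟩
    obtain ⟨j, hj⟩ := exists_skewProduct_iterate_mem_coreArc (h := h) hν0 hg
      (p := (((skewProduct h g)^[k] (b, x)).1, x')) hx'
    refine hno ⟨j + k, _, hj, ?_⟩
    rw [Function.iterate_add_apply, skewProduct_iterate_map hlift, Prod.map, ← hcoe,
      id_eq, skewProduct_iterate_map hlift]
    rfl
  intro k
  induction k with
  | zero => exact mem_of_mem_Icc 0 hx
  | succ k ih =>
    refine mem_of_mem_Icc (k + 1) ?_
    rw [skewProduct_iterate_succ_snd]
    exact (hg _).apply_mem_Icc hν0 hν ih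

lemma subsingleton_forall_notMem_coreArc (hν0 : 0 < ν) (hν : ν ≤ 1 / 3)
    (hg : ∀ b, ModelLift ν (g b)) (hlift : ∀ b (x : ℝ), (g b x : S1) = f b x) (b : B) :
    {x : S1 | ∀ k, ((skewProduct h f)^[k] (b, x)).2 ∉
      (fun t : ℝ ↦ (t : S1)) '' coreArc ν}.Subsingleton := by
  have exists_rep (x : S1) (hx : ∀ k, ((skewProduct h f)^[k] (b, x)).2 ∉
      (fun t : ℝ ↦ (t : S1)) '' coreArc ν) :
      ∃ r : ℝ, (r : S1) = x ∧ ∀ k, ((skewProduct h g)^[k] (b, r)).2 ∈ repellingArc := by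
    obtain ⟨r, hr, rfl⟩ : x ∈ (fun t : ℝ ↦ (t : S1)) '' Icc (-(2 / 3)) (-(2 / 3) + 2) := by
      rw [AddCircle.coe_image_Icc_eq]
      trivial
    have hr' : r ∈ Icc (-(7 / 3)) (4 / 3) := ⟨by linarith [hr.1], by linarith [hr.2]⟩
    exact ⟨r, rfl, (forall_mem_repellingArc_or_exists_mem_coreArc hν0 hν hg hlift hr').resolve_right
      fun ⟨k, hk⟩ ↦ hx k hk⟩
  have expanding (b : B) (x : ℝ) (hx : x ∈ repellingArc) (x' : ℝ) (hx' : x' ∈ repellingArc) :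
      (1 + ν) * dist x x' ≤ dist (g b x) (g b x') := by
    rw [Real.dist_eq, Real.dist_eq, (hg b).sub_eq_mul x' hx' x hx, abs_mul,
      abs_of_pos (by linarith : 0 < 1 + ν)]
  intro x hx x' hx'
  obtain ⟨r, rfl, hr⟩ := exists_rep x hx
  obtain ⟨r', rfl, hr'⟩ := exists_rep x' hx'
  rw [eq_of_forall_skewProduct_iterate_mem (isBounded_Icc _ _) (by linarith) expanding hr hr']

lemma ae_exists_skewProduct_iterate_mem_coreArc [MeasurableSpace B] (μ : Measure B) (hν0 : 0 < ν)
    (hν : ν ≤ 1 / 3) (hg : ∀ b, ModelLift ν (g b))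
    (hlift : ∀ b (x : ℝ), (g b x : S1) = f b x) (hF : Measurable (skewProduct h f)) :
    ∀ᵐ p ∂μ.prod (volume : Measure S1),
      ∃ k, ((skewProduct h f)^[k] p).2 ∈ (fun t : ℝ ↦ (t : S1)) '' coreArc ν := by
  have hcore : MeasurableSet ((fun t : ℝ ↦ (t : S1)) '' coreArc ν) :=
    (isCompact_Icc.image (AddCircle.continuous_mk' 2)).isClosed.measurableSet
  have hmeas : MeasurableSet {p : B × S1 | ∀ k, ((skewProduct h f)^[k] p).2 ∉
      (fun t : ℝ ↦ (t : S1)) '' coreArc ν} := by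
    rw [ofPred_forall]
    exact .iInter fun k ↦ (measurable_snd.comp (hF.iterate k)) hcore.compl
  simp only [ae_iff, not_exists]
  rw [Measure.measure_prod_null hmeas]
  exact .of_forall fun b ↦
    (subsingleton_forall_notMem_coreArc hν0 hν hg hlift b).measure_zero volume

lemma mul_pow_le_skewProduct_iterate_snd (hν0 : 0 ≤ ν) (hν : ν ≤ 2) (hg : ∀ b, ModelLift ν (g b))
    {c : ℝ} (hc : c ∈ Icc (0 : ℝ) 1) {p : B × ℝ} (hp : c ≤ p.2) (k : ℕ) :
    (1 - ν / 2) ^ k * c ≤ ((skewProduct h g)^[k] p).2 := by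
  induction k with
  | zero => simpa using hp
  | succ k ih =>
    have hpow0 : 0 ≤ (1 - ν / 2) ^ k := pow_nonneg (by linarith) _
    have hpow1 : (1 - ν / 2) ^ k ≤ 1 := pow_le_one₀ (by linarith) (by linarith)
    rw [skewProduct_iterate_succ_snd, pow_succ', mul_assoc]
    exact ((hg _).mul_le _ ⟨mul_nonneg hpow0 hc.1, mul_le_one₀ hpow1 hc.1 hc.2⟩).trans
      ((hg _).monotone ih)

variable {S : Set B} {M : ℕ}

lemma mem_avoidingSet_of_iterate_snd_lt (hν0 : 0 ≤ ν) (hν : ν ≤ 2)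
    (hg : ∀ b, ModelLift ν (g b)) (hS : ∀ b ∈ S, ∀ x ∈ coreArc ν, 3 / 4 ≤ g b x)
    (hM : 1 / 3 ≤ (1 - ν / 2) ^ M) {p : B × ℝ} (hp : p.2 ∈ coreArc ν)
    (hlt : ((skewProduct h g)^[M + 1] p).2 < 1 / 4) : p.1 ∈ avoidingSet h S (M + 1) := by
  intro i hi hiS
  have hreset : 3 / 4 ≤ ((skewProduct h g)^[i + 1] p).2 := by
    rw [skewProduct_iterate_succ_snd]
    exact hS _ hiS _ (skewProduct_iterate_snd_mem (fun b ↦ (hg b).mapsTo_coreArc) hp i)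
  have hdecay := mul_pow_le_skewProduct_iterate_snd (h := h) hν0 hν hg (by norm_num) hreset (M - i)
  rw [← Function.iterate_add_apply, show M - i + (i + 1) = M + 1 by lia] at hdecay
  have hpow : (1 - ν / 2) ^ M ≤ (1 - ν / 2) ^ (M - i) :=
    pow_le_pow_of_le_one (by linarith) (by linarith) (Nat.sub_le M i)
  linarith

lemma mem_avoidingSet_of_iterate_mem_target (hν0 : 0 < ν) (hν : ν ≤ 1 / 3)
    (hg : ∀ b, ModelLift ν (g b)) (hlift : ∀ b (x : ℝ), (g b x : S1) = f b x)
    (hS : ∀ b ∈ S, ∀ x ∈ coreArc ν, 3 / 4 ≤ g b x) (hM : 1 / 3 ≤ (1 - ν / 2) ^ M) {p : B × S1}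
    (hp : p.2 ∈ (fun t : ℝ ↦ (t : S1)) '' coreArc ν)
    (htarget : ((skewProduct h f)^[M + 1] p).2 ∈ (fun t : ℝ ↦ (t : S1)) '' Ioo 0 (1 / 4)) :
    p.1 ∈ avoidingSet h S (M + 1) := by
  obtain ⟨b, x⟩ := p
  obtain ⟨v, hv, rfl⟩ := hp
  obtain ⟨w, hw, hwv⟩ := htarget
  have hcore : ((skewProduct h g)^[M + 1] (b, v)).2 ∈ coreArc ν :=
    skewProduct_iterate_snd_mem (fun b ↦ (hg b).mapsTo_coreArc) hv _
  have hw_eq : w = ((skewProduct h g)^[M + 1] (b, v)).2 := by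
    refine (AddCircle.coe_eq_coe_iff_of_mem_Ico (p := (2 : ℝ)) (a := -ν)
      ⟨by linarith [hw.1], by linarith [hw.2]⟩ ⟨hcore.1, by linarith [hcore.2]⟩).1 (hwv.trans ?_)
    rw [skewProduct_iterate_map hlift]
    rfl
  exact mem_avoidingSet_of_iterate_snd_lt (p := (b, v)) hν0.le (by linarith) hg hS hM hv
    (hw_eq ▸ hw.2)

/-- Once an orbit is trapped over `I`, entering `(0, 1/4)` requires that the base orbit has avoided
`S` for the last `M + 1` steps. -/
theorem isInvisible_skewProduct [MeasurableSpace B] {μ : Measure B} [IsProbabilityMeasure μ]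
    (hh : Ergodic h μ) (hν0 : 0 < ν) (hν : ν ≤ 1 / 3) (hg : ∀ b, ModelLift ν (g b))
    (hlift : ∀ b (x : ℝ), (g b x : S1) = f b x) (hF : Measurable (skewProduct h f))
    (hSm : MeasurableSet S) (hS : ∀ b ∈ S, ∀ x ∈ coreArc ν, 3 / 4 ≤ g b x)
    (hM : 1 / 3 ≤ (1 - ν / 2) ^ M) {α : ℝ} (hα : μ.real (avoidingSet h S (M + 1)) < α) :
    IsInvisible (skewProduct h f) (μ.prod (volume : Measure S1))
      {q | q.2 ∈ (fun t : ℝ ↦ (t : S1)) '' Ioo 0 (1 / 4)} α := by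
  have trapped (b : B) : MapsTo (f b) ((fun t : ℝ ↦ (t : S1)) '' coreArc ν)
      ((fun t : ℝ ↦ (t : S1)) '' coreArc ν) := by
    rintro _ ⟨v, hv, rfl⟩
    exact ⟨g b v, (hg b).mapsTo_coreArc hv, hlift b v⟩
  have hbirkhoff := ae_birkhoffSum_indicator_le hh
    (measurableSet_avoidingSet hh.measurable hSm (M + 1)) hα
  filter_upwards [ae_exists_skewProduct_iterate_mem_coreArc μ hν0 hν hg hlift hF,
    Measure.quasiMeasurePreserving_fst.ae hbirkhoff] with p ⟨K, hK⟩ ⟨C, hC⟩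
  refine limsup_visitFreq_le (C := (M + 1 + K : ℕ) + α * K + C) fun N ↦ ?_
  have hcompare := birkhoffSum_indicator_le_of_visits (F := skewProduct h f) (T := h) (p := p)
    (V := {q : B × S1 | q.2 ∈ (fun t : ℝ ↦ (t : S1)) '' Ioo 0 (1 / 4)}) (y := p.1)
    (E := avoidingSet h S (M + 1)) (K := K) (Q := M + 1 + K) (fun k hk ↦ ?_) N
  · have := hC (K + N)
    push_cast at this ⊢ hcompare
    linarith
  · rw [← skewProduct_iterate_fst (g := f)]
    refine mem_avoidingSet_of_iterate_mem_target hν0 hν hg hlift hS hM ?_ ?_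
    · rw [Function.iterate_add_apply]
      exact skewProduct_iterate_snd_mem trapped hK k
    · rwa [← Function.iterate_add_apply, show M + 1 + (k + K) = k + (M + 1 + K) by ring]

end Dynamics

section DoublingMap

lemma rep1_coe (x : ℝ) : rep1 (x : AddCircle (1 : ℝ)) = Int.fract x := by
  simp [rep1, AddCircle.coe_equivIco_mk_apply]

lemma coe_rep1 (y : AddCircle (1 : ℝ)) : (rep1 y : AddCircle (1 : ℝ)) = y :=
  AddCircle.coe_equivIco

lemma rep1_mem_Ico (y : AddCircle (1 : ℝ)) : rep1 y ∈ Ico 0 1 := by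
  simpa [rep1] using (AddCircle.equivIco (1 : ℝ) 0 y).2

lemma measurable_rep1 : Measurable rep1 :=
  measurable_subtype_coe.comp (AddCircle.measurableEquivIco (1 : ℝ) 0).measurable

lemma rep1_two_nsmul (y : AddCircle (1 : ℝ)) : rep1 (2 • y) = Int.fract (2 * rep1 y) := by
  conv_lhs => rw [← coe_rep1 y, ← AddCircle.coe_nsmul, rep1_coe, nsmul_eq_mul, Nat.cast_ofNat]

lemma rep1_two_nsmul_of_lt {y : AddCircle (1 : ℝ)} (hy : rep1 y < 1 / 2) :
    rep1 (2 • y) = 2 * rep1 y := by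
  rw [rep1_two_nsmul, Int.fract_eq_self]
  exact ⟨by linarith [(rep1_mem_Ico y).1], by linarith⟩

lemma rep1_two_nsmul_of_le {y : AddCircle (1 : ℝ)} (hy : 1 / 2 ≤ rep1 y) :
    rep1 (2 • y) = 2 * rep1 y - 1 := by
  rw [rep1_two_nsmul, Int.fract_eq_iff]
  exact ⟨by linarith, by linarith [(rep1_mem_Ico y).2], 1, by simp⟩

lemma volume_rep1_preimage_Ico_le (u v : ℝ) :
    volume (rep1 ⁻¹' Ico u v) ≤ ENNReal.ofReal (v - u) := by
  rw [← (AddCircle.measurePreserving_mk 1 0).measure_preimage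
    (measurable_rep1 measurableSet_Ico).nullMeasurableSet, ← Real.volume_Ico,
    ← restrict_Ico_eq_restrict_Ioc, Measure.restrict_apply' measurableSet_Ico]
  refine measure_mono fun x ⟨hx, hx01⟩ ↦ ?_
  rw [zero_add] at hx01
  rwa [mem_preimage, mem_preimage, rep1_coe, Int.fract_eq_self.2 hx01] at hx

/-- The arc `[1/2, 7/8)` of the base circle, over which the fiber map is exactly `f₁`. -/
def resettingArc : Set (AddCircle (1 : ℝ)) := rep1 ⁻¹' Ico (1 / 2) (7 / 8)

lemma measurableSet_resettingArc : MeasurableSet resettingArc :=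
  measurable_rep1 measurableSet_Ico

/-- The binary digits of a point avoiding `[1/2, 7/8)` for `m` steps are, among the first `m`, some
zeros followed only by ones. -/
lemma exists_rep1_mem_Ico_of_mem_avoidingSet {m : ℕ} {y : AddCircle (1 : ℝ)}
    (hy : y ∈ avoidingSet (fun y ↦ 2 • y) resettingArc m) :
    ∃ a ∈ Finset.range (m + 1), rep1 y ∈ Ico ((1 / 2) ^ a - (1 / 2) ^ m) ((1 / 2) ^ a) := by
  induction m generalizing y with
  | zero => exact ⟨0, by simp, by simpa using rep1_mem_Ico y⟩
  | succ m ih =>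
    obtain ⟨hy0, hy2⟩ := mem_avoidingSet_succ.1 hy
    obtain ⟨a, ha, hlow, hhigh⟩ := ih hy2
    rcases lt_or_ge (rep1 y) (1 / 2) with hhalf | hhalf
    · rw [rep1_two_nsmul_of_lt hhalf] at hlow hhigh
      exact ⟨a + 1, by simpa using ha, by rw [pow_succ, pow_succ]; linarith,
        by rw [pow_succ]; linarith⟩
    · have h78 : 7 / 8 ≤ rep1 y := not_lt.1 fun hlt ↦ hy0 ⟨hhalf, hlt⟩
      rw [rep1_two_nsmul_of_le hhalf] at hlow hhigh
      obtain rfl : a = 0 := by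
        by_contra hne
        have : ((1 : ℝ) / 2) ^ a ≤ 1 / 2 := pow_le_of_le_one (by norm_num) (by norm_num) hne
        linarith
      exact ⟨0, by simp, by rw [pow_succ]; linarith, by simpa using (rep1_mem_Ico y).2⟩

lemma volume_real_avoidingSet_le (m : ℕ) :
    volume.real (avoidingSet (fun y ↦ 2 • y) resettingArc m) ≤ (m + 1) * (1 / 2) ^ m := by
  refine ENNReal.toReal_le_of_le_ofReal (by positivity) ?_
  calc volume (avoidingSet (fun y ↦ 2 • y) resettingArc m)
      ≤ volume (⋃ a ∈ Finset.range (m + 1),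
          rep1 ⁻¹' Ico ((1 / 2) ^ a - (1 / 2) ^ m) ((1 / 2) ^ a)) :=
        measure_mono fun y hy ↦ by
          simpa only [mem_iUnion₂, mem_preimage, exists_prop] using
            exists_rep1_mem_Ico_of_mem_avoidingSet hy
    _ ≤ ∑ a ∈ Finset.range (m + 1),
          volume (rep1 ⁻¹' Ico ((1 / 2) ^ a - (1 / 2) ^ m) ((1 / 2) ^ a)) :=
        measure_biUnion_finset_le _ _
    _ ≤ ∑ a ∈ Finset.range (m + 1), ENNReal.ofReal ((1 / 2) ^ m) :=
        Finset.sum_le_sum fun a _ ↦ by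
          simpa only [sub_sub_cancel] using
            volume_rep1_preimage_Ico_le ((1 / 2) ^ a - (1 / 2) ^ m) ((1 / 2) ^ a)
    _ = ENNReal.ofReal ((m + 1) * (1 / 2) ^ m) := by
        rw [Finset.sum_const, Finset.card_range, nsmul_eq_mul, ENNReal.ofReal_mul (by positivity),
          ← Nat.cast_succ, ENNReal.ofReal_natCast]

lemma volume_real_avoidingSet_lt {n : ℕ} (hn : 6 ≤ n) :
    volume.real (avoidingSet (fun y ↦ 2 • y) resettingArc (n + n / 2 + 1)) < (1 / 2) ^ n := by
  have linear_lt_pow (k : ℕ) (hk : 3 ≤ k) : 3 * k + 3 < 2 * 2 ^ k := by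
    induction k, hk using Nat.le_induction with
    | base => norm_num
    | succ k hk ih => rw [pow_succ]; lia
  have hlt : ((n + n / 2 + 1 : ℕ) : ℝ) + 1 < 2 * 2 ^ (n / 2) := by
    have := linear_lt_pow (n / 2) (by lia)
    exact_mod_cast (by lia : n + n / 2 + 1 + 1 < 2 * 2 ^ (n / 2))
  calc volume.real (avoidingSet (fun y ↦ 2 • y) resettingArc (n + n / 2 + 1))
      ≤ ((n + n / 2 + 1 : ℕ) + 1) * (1 / 2) ^ (n + n / 2 + 1) := volume_real_avoidingSet_le _
    _ < 2 * 2 ^ (n / 2) * (1 / 2) ^ (n + n / 2 + 1) := by gcongr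
    _ = (1 / 2) ^ n := by
        rw [pow_succ, pow_add, one_div_pow 2 (n / 2)]
        field_simp

end DoublingMap

section AlmostStep

/-- The weight of `f₁` in the fiber map over `y`. -/
noncomputable def fiberWeight (y : ℝ) : ℝ :=
  if y < 3 / 8 then 0
  else if y < 1 / 2 then (8 * y - 3) ^ 2
  else if y < 7 / 8 then 1
  else (8 - 8 * y) ^ 2

lemma fiberWeight_mem_Icc {y : ℝ} (hy : y ≤ 1) : fiberWeight y ∈ Icc 0 1 := by
  unfold fiberWeight
  split_ifs <;> constructor <;> nlinarith

lemma fiberWeight_of_mem_Ico {y : ℝ} (hy : y ∈ Ico (1 / 2) (7 / 8)) : fiberWeight y = 1 := by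
  rw [fiberWeight, if_neg (by linarith [hy.1]), if_neg hy.1.not_gt, if_pos hy.2]

lemma measurable_fiberWeight : Measurable fiberWeight :=
  .ite measurableSet_Iio measurable_const <| .ite measurableSet_Iio (by fun_prop) <|
    .ite measurableSet_Iio measurable_const (by fun_prop)

/-- The lift, over the base point `y`, of the fiber map of the almost step skew product. -/
noncomputable def fiberLift (G0 G1 : ℝ → ℝ) (y : AddCircle (1 : ℝ)) : ℝ → ℝ :=
  (1 - fiberWeight (rep1 y)) • G0 + fiberWeight (rep1 y) • G1

variable {G0 G1 : ℝ → ℝ} {f0 f1 : S1 → S1} {ft : ℝ → S1 → S1} {ν : ℝ}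

lemma coe_fiberLift (hlift0 : ∀ x : ℝ, (G0 x : S1) = f0 x) (hlift1 : ∀ x : ℝ, (G1 x : S1) = f1 x)
    (hft : ∀ t x : ℝ, ft t x = (((1 - t ^ 2) * G0 x + t ^ 2 * G1 x : ℝ) : S1))
    (y : AddCircle (1 : ℝ)) (x : ℝ) :
    (fiberLift G0 G1 y x : S1) = fiberFam f0 f1 ft (rep1 y) x := by
  simp only [fiberLift, fiberFam, fiberWeight, Pi.add_apply, Pi.smul_apply, smul_eq_mul]
  split_ifs
  · rw [← hlift0]; simp
  · rw [hft]
  · rw [← hlift1]; simp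
  · rw [hft]

lemma fiberLift_of_mem_resettingArc {y : AddCircle (1 : ℝ)} (hy : y ∈ resettingArc) :
    fiberLift G0 G1 y = G1 := by
  simp [fiberLift, fiberWeight_of_mem_Ico hy]

lemma measurable_fiberLift (hG0 : Measurable G0) (hG1 : Measurable G1) :
    Measurable fun q : AddCircle (1 : ℝ) × ℝ ↦ fiberLift G0 G1 q.1 q.2 := by
  have hw : Measurable fun q : AddCircle (1 : ℝ) × ℝ ↦ fiberWeight (rep1 q.1) :=
    measurable_fiberWeight.comp (measurable_rep1.comp measurable_fst)
  simp only [fiberLift, Pi.add_apply, Pi.smul_apply, smul_eq_mul]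
  fun_prop

lemma modelLift_fiberLift (hG0 : ModelLift ν G0) (hG1 : ModelLift ν G1)
    (y : AddCircle (1 : ℝ)) : ModelLift ν (fiberLift G0 G1 y) := by
  have hw := fiberWeight_mem_Icc (rep1_mem_Ico y).2.le
  exact convex_modelLift hG0 hG1 (sub_nonneg.2 hw.2) hw.1 (sub_add_cancel _ _)

lemma one_third_le_pow {n : ℕ} (hn : n ≠ 0) : 1 / 3 ≤ (1 - 1 / (n : ℝ) / 2) ^ (n + n / 2) := by
  have hn1 : (1 : ℝ) ≤ n := mod_cast Nat.one_le_iff_ne_zero.2 hn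
  have hinv : 1 / (n : ℝ) ≤ 1 := div_le_one_of_le₀ hn1 n.cast_nonneg
  have hmul : (n : ℝ) * (1 / n) = 1 := mul_one_div_cancel (by positivity)
  have hinv0 : 0 < 1 / (n : ℝ) := by positivity
  have bernoulli (k : ℕ) : 1 - k * (1 / (n : ℝ) / 2) ≤ (1 - 1 / (n : ℝ) / 2) ^ k := by
    simpa [← sub_eq_add_neg] using one_add_mul_le_pow (a := -(1 / (n : ℝ) / 2)) (by linarith) k
  have half_le : 1 / 2 ≤ (1 - 1 / (n : ℝ) / 2) ^ n := by linarith [bernoulli n]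
  have three_quarters_le : 3 / 4 ≤ (1 - 1 / (n : ℝ) / 2) ^ (n / 2) := by
    have : ((n / 2 : ℕ) : ℝ) * (1 / n) ≤ n / 2 * (1 / n) :=
      mul_le_mul_of_nonneg_right Nat.cast_div_le hinv0.le
    linarith [bernoulli (n / 2)]
  calc (1 : ℝ) / 3 ≤ 1 / 2 * (3 / 4) := by norm_num
    _ ≤ (1 - 1 / (n : ℝ) / 2) ^ n * (1 - 1 / (n : ℝ) / 2) ^ (n / 2) := by gcongr
    _ = (1 - 1 / (n : ℝ) / 2) ^ (n + n / 2) := (pow_add _ _ _).symm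

end AlmostStep

section Invisibility

variable {ν : ℝ} {G : ℝ → ℝ}

lemma mapsTo_coreArc_of_homothety {c p : ℝ} (hc : c ∈ Icc 0 1) (hp : p ∈ coreArc ν)
    (hG : ∀ x ∈ coreArc ν, G x = (1 - c) * p + c * x) : MapsTo G (coreArc ν) (coreArc ν) :=
  fun x hx ↦ hG x hx ▸ convex_Icc _ _ hp hx (sub_nonneg.2 hc.2) hc.1 (sub_add_cancel _ _)

lemma semiconj_almostStep (lam : ℝ) (f0 f1 : S1 → S1) (ft : ℝ → S1 → S1) :
    Function.Semiconj (Prod.map Prod.fst id) (almostStep lam f0 f1 ft)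
      (skewProduct (fun y ↦ 2 • y) fun y ↦ fiberFam f0 f1 ft (rep1 y)) :=
  fun p ↦ Prod.ext (two_nsmul p.1.1).symm rfl

theorem isInvisible_almostStep_of_modelLift {n : ℕ} (hn : 6 ≤ n) {f0 f1 : S1 → S1}
    {G0 G1 : ℝ → ℝ} {ft : ℝ → S1 → S1}
    (hlift0 : ∀ x : ℝ, (G0 x : S1) = f0 x) (hlift1 : ∀ x : ℝ, (G1 x : S1) = f1 x)
    (hft : ∀ t x : ℝ, ft t x = (((1 - t ^ 2) * G0 x + t ^ 2 * G1 x : ℝ) : S1))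
    (hG0 : ModelLift (1 / n) G0) (hG1 : ModelLift (1 / n) G1)
    (hreset : ∀ x ∈ coreArc (1 / n), 3 / 4 ≤ G1 x) (lam : ℝ) (m : Measure ℂ) [SFinite m] :
    IsInvisible (almostStep lam f0 f1 ft)
      (((volume : Measure (AddCircle (1 : ℝ))).prod m).prod (volume : Measure S1))
      {q | q.2 ∈ (fun t : ℝ ↦ (t : S1)) '' Ioo 0 (1 / 4)} ((1 / 2) ^ n) := by
  have hn' : (6 : ℝ) ≤ n := mod_cast hn
  have : IsProbabilityMeasure (volume : Measure (AddCircle (1 : ℝ))) :=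
    ⟨by rw [AddCircle.measure_univ, ENNReal.ofReal_one]⟩
  have ergodic_doubling : Ergodic fun y : AddCircle (1 : ℝ) ↦ 2 • y :=
    AddCircle.ergodic_nsmul one_lt_two
  have hlift := coe_fiberLift hlift0 hlift1 hft
  have hmeas : Measurable (skewProduct (fun y ↦ 2 • y) fun y ↦ fiberFam f0 f1 ft (rep1 y)) :=
    (ergodic_doubling.measurable.comp measurable_fst).prodMk <| measurable_of_lift hlift <|
      measurable_fiberLift hG0.monotone.measurable hG1.monotone.measurable
  have hν0 : 0 < 1 / (n : ℝ) := by positivity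
  have hν : 1 / (n : ℝ) ≤ 1 / 3 := one_div_le_one_div_of_le (by norm_num) (by linarith)
  have reset : ∀ y ∈ resettingArc, ∀ x ∈ coreArc (1 / n), 3 / 4 ≤ fiberLift G0 G1 y x :=
    fun y hy ↦ fiberLift_of_mem_resettingArc (G0 := G0) hy ▸ hreset
  have invisible_over_circle := isInvisible_skewProduct ergodic_doubling hν0 hν
    (modelLift_fiberLift hG0 hG1) hlift hmeas measurableSet_resettingArc reset
    (one_third_le_pow (by lia)) (volume_real_avoidingSet_lt hn)
  have quasiMeasurePreserving_proj : Measure.QuasiMeasurePreserving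
      (Prod.map Prod.fst id : Base × S1 → AddCircle (1 : ℝ) × S1)
      ((volume.prod m).prod volume) (volume.prod volume) :=
    QuasiMeasurePreserving.prodMap Measure.quasiMeasurePreserving_fst (.id volume)
  have invisible_over_torus := invisible_over_circle.of_semiconj quasiMeasurePreserving_proj
    (semiconj_almostStep lam f0 f1 ft)
  exact invisible_over_torus

theorem stmt_18_general {n : ℕ} (hn : 6 ≤ n) {ν : ℝ} (hν : ν = 1 / n) {f0 f1 : S1 → S1}
    {G0 G1 : ℝ → ℝ}
    (hlift0 : ∀ x : ℝ, (G0 x : S1) = f0 x) (hlift1 : ∀ x : ℝ, (G1 x : S1) = f1 x)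
    (hcont0 : Continuous G0) (hcont1 : Continuous G1)
    (hmono0 : Monotone G0) (hmono1 : Monotone G1)
    (hdeck0 : ∀ x, G0 (x + 2) = G0 x + 2) (hdeck1 : ∀ x, G1 (x + 2) = G1 x + 2)
    (hI0 : ∀ x ∈ coreArc ν, G0 x = (1 - ν / 2) * x)
    (hI1 : ∀ x ∈ coreArc ν, G1 x = 1 + (1 / 4 - ν) * (x - 1))
    (hJ0 : ∀ x ∈ repellingArc, deriv G0 x = 1 + ν)
    (hJ1 : ∀ x ∈ repellingArc, deriv G1 x = 1 + ν)
    (hup0 : ∀ x ∈ Icc (-(1 / 3)) (-ν), ∃ t : ℝ, x + ν ^ 2 / 2 ≤ t ∧ t ≤ 1 + ν ∧ f0 x = t)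
    (hup1 : ∀ x ∈ Icc (-(1 / 3)) (-ν), ∃ t : ℝ, x + ν ^ 2 / 2 ≤ t ∧ t ≤ 1 + ν ∧ f1 x = t)
    (hdown0 : ∀ x ∈ Icc (1 + ν) (4 / 3), ∃ t : ℝ, -ν ≤ t ∧ t ≤ x - ν ^ 2 / 2 ∧ f0 x = t)
    (hdown1 : ∀ x ∈ Icc (1 + ν) (4 / 3), ∃ t : ℝ, -ν ≤ t ∧ t ≤ x - ν ^ 2 / 2 ∧ f1 x = t)
    {ft : ℝ → S1 → S1}
    (hft : ∀ t x : ℝ, ft t x = (((1 - t ^ 2) * G0 x + t ^ 2 * G1 x : ℝ) : S1))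
    (lam : ℝ) (m : Measure ℂ) [SFinite m] :
    IsInvisible (almostStep lam f0 f1 ft)
      (((volume : Measure (AddCircle (1 : ℝ))).prod m).prod (volume : Measure S1))
      {q | q.2 ∈ (fun t : ℝ ↦ (t : S1)) '' Ioo 0 (1 / 4)} ((1 / 2) ^ n) := by
  have hn' : (6 : ℝ) ≤ n := mod_cast hn
  have hν0 : 0 < ν := by rw [hν]; positivity
  have hν6 : ν ≤ 1 / 6 := hν ▸ one_div_le_one_div_of_le (by norm_num) hn'
  have unit_subset : Icc 0 1 ⊆ coreArc ν := Icc_subset_Icc (by linarith) (by linarith)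
  have hG0 : ModelLift ν G0 := by
    refine modelLift_of_lift hν0 hν6 hcont0 hmono0 hlift0 hdeck0
      (mapsTo_coreArc_of_homothety (c := 1 - ν / 2) (p := 0) ⟨by linarith, by linarith⟩
        (unit_subset (by simp)) fun x hx ↦ ?_) hup0 hdown0 hJ0
      fun x hx ↦ (hI0 x (unit_subset hx)).ge
    rw [hI0 x hx, mul_zero, zero_add]
  have hG1 : ModelLift ν G1 := by
    refine modelLift_of_lift hν0 hν6 hcont1 hmono1 hlift1 hdeck1
      (mapsTo_coreArc_of_homothety (c := 1 / 4 - ν) (p := 1) ⟨by linarith, by linarith⟩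
        (unit_subset (by simp)) fun x hx ↦ ?_) hup1 hdown1 hJ1 fun x hx ↦ ?_
    · rw [hI1 x hx]; ring
    · rw [hI1 x (unit_subset hx)]; nlinarith [hx.1, hx.2]
  have hreset : ∀ x ∈ coreArc ν, 3 / 4 ≤ G1 x := fun x hx ↦ by
    rw [hI1 x hx]; nlinarith [hx.1]
  subst hν
  exact isInvisible_almostStep_of_modelLift hn hlift0 hlift1 hft hG0 hG1 hreset lam m

end Invisibility

/-- Lemma on invisibility for the model map `F`. Fix `n ≥ 100`,
`ν = 1/n`. Let `f₀, f₁` be orientation-preserving `C¹` diffeomorphisms of `S¹ = ℝ/2ℤ`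
(with lifts `G₀, G₁`) such that on `I = [−ν, 1+ν]`, `f₀(x) = (1 − ν/2)x` and
`f₁(x) = 1 + (1/4 − ν)(x−1)`; on `J = [−2/3, −1/3]` both have derivative identically
`1 + ν` and exactly one (repelling) fixed point, at distance at least `ν` from the
endpoints of `J`; and `f_j(x) ≥ x + ν²/2` on `[−1/3, −ν]`, `f_j(x) ≤ x − ν²/2` on
`[1+ν, 4/3]` for `j = 0,1`. Let `f_t = (1−t²)f₀ + t²f₁` (via the lifts) and let `F` be
the associated almost step skew product over the solenoid. Then `V = π⁻¹((0, 1/4))` is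
`2^{−n}`-invisible for `F` with respect to the Lebesgue measure on `B × S¹`. -/
theorem stmt_18 (n : ℕ) (hn : 100 ≤ n) (ν : ℝ) (hν : ν = 1 / (n : ℝ))
    (R lam : ℝ) (hR : 2 ≤ R) (hlam0 : 0 < lam) (hlam1 : lam < 0.1)
    (hlamR : lam * R < 1)
    (f0 f1 : S1 ≃ₜ S1) (G0 G1 : ℝ → ℝ)
    -- `G₀, G₁` are `C¹`, orientation-preserving, nonsingular lifts of `f₀, f₁`:
    (hlift0 : ∀ x : ℝ, ((G0 x : ℝ) : S1) = f0 ((x : ℝ) : S1))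
    (hlift1 : ∀ x : ℝ, ((G1 x : ℝ) : S1) = f1 ((x : ℝ) : S1))
    (hmono0 : StrictMono G0) (hmono1 : StrictMono G1)
    (hdeck0 : ∀ x, G0 (x + 2) = G0 x + 2) (hdeck1 : ∀ x, G1 (x + 2) = G1 x + 2)
    (hC1_0 : ContDiff ℝ 1 G0) (hC1_1 : ContDiff ℝ 1 G1)
    (hpos0 : ∀ x, 0 < deriv G0 x) (hpos1 : ∀ x, 0 < deriv G1 x)
    -- on `I = [−ν, 1+ν]` the maps are the model affine contractions:
    (hI0 : ∀ x ∈ Icc (-ν) (1 + ν), G0 x = (1 - ν / 2) * x)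
    (hI1 : ∀ x ∈ Icc (-ν) (1 + ν), G1 x = 1 + (1 / 4 - ν) * (x - 1))
    -- on `J = [−2/3, −1/3]` the derivative is identically `1 + ν`:
    (hJ0 : ∀ x ∈ Icc (-(2 / 3) : ℝ) (-(1 / 3)), deriv G0 x = 1 + ν)
    (hJ1 : ∀ x ∈ Icc (-(2 / 3) : ℝ) (-(1 / 3)), deriv G1 x = 1 + ν)
    -- each has exactly one fixed point in `J`, `ν`-far from the endpoints of `J`:
    (hfix0 : ∃ r ∈ Icc (-(2 / 3) + ν : ℝ) (-(1 / 3) - ν),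
      f0 ((r : ℝ) : S1) = ((r : ℝ) : S1) ∧
      ∀ x ∈ Icc (-(2 / 3) : ℝ) (-(1 / 3)), f0 ((x : ℝ) : S1) = ((x : ℝ) : S1) → x = r)
    (hfix1 : ∃ r ∈ Icc (-(2 / 3) + ν : ℝ) (-(1 / 3) - ν),
      f1 ((r : ℝ) : S1) = ((r : ℝ) : S1) ∧
      ∀ x ∈ Icc (-(2 / 3) : ℝ) (-(1 / 3)), f1 ((x : ℝ) : S1) = ((x : ℝ) : S1) → x = r)
    -- one-way motion between `J` and `I`:
    (hup0 : ∀ x ∈ Icc (-(1 / 3) : ℝ) (-ν),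
      ∃ t : ℝ, x + ν ^ 2 / 2 ≤ t ∧ t ≤ 1 + ν ∧ f0 ((x : ℝ) : S1) = ((t : ℝ) : S1))
    (hup1 : ∀ x ∈ Icc (-(1 / 3) : ℝ) (-ν),
      ∃ t : ℝ, x + ν ^ 2 / 2 ≤ t ∧ t ≤ 1 + ν ∧ f1 ((x : ℝ) : S1) = ((t : ℝ) : S1))
    (hdown0 : ∀ x ∈ Icc (1 + ν) (4 / 3 : ℝ),
      ∃ t : ℝ, -ν ≤ t ∧ t ≤ x - ν ^ 2 / 2 ∧ f0 ((x : ℝ) : S1) = ((t : ℝ) : S1))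
    (hdown1 : ∀ x ∈ Icc (1 + ν) (4 / 3 : ℝ),
      ∃ t : ℝ, -ν ≤ t ∧ t ≤ x - ν ^ 2 / 2 ∧ f1 ((x : ℝ) : S1) = ((t : ℝ) : S1))
    -- the isotopy `f_t = (1−t²)f₀ + t²f₁`, defined via the lifts:
    (ft : ℝ → S1 → S1)
    (hft : ∀ t : ℝ, ∀ x : ℝ,
      ft t ((x : ℝ) : S1) = (((1 - t ^ 2) * G0 x + t ^ 2 * G1 x : ℝ) : S1)) :
    ∀ᵐ p ∂(((volume : Measure (AddCircle (1 : ℝ))).prod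
        ((volume : Measure ℂ).restrict (closedBall (0 : ℂ) R))).prod
        (volume : Measure S1)),
      limsup (fun N : ℕ => visitFreq (almostStep lam f0 f1 ft)
        {q : Base × S1 | q.2 ∈ (fun t : ℝ => ((t : ℝ) : S1)) '' Ioo 0 (1 / 4)} p N)
        atTop ≤ (1 / 2 : ℝ) ^ n :=
  stmt_18_general (by lia) hν hlift0 hlift1 hC1_0.continuous hC1_1.continuous hmono0.monotone
    hmono1.monotone hdeck0 hdeck1 hI0 hI1 hJ0 hJ1 hup0 hup1 hdown0 hdown1 hft lam _
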